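/- Let T > 0, α ≥ 0, 0 < λ ≤ 1, and ε > 0 with λ − α − ε > 0. Let π = {s_i} be a partition of [0,T] with mesh ‖π‖ := max_i (s_{i+1} − s_i). Then for every index i and every s ∈ [s_i, s_{i+1}), Σ_{k ≥ i+1} ∫_{s_k}^{s_{k+1}} (r − s_k)^λ (r − s)^(−α−1) dr ≤ (T − s)^ε · ε^(−1) · ‖π‖^(λ−α−ε). -/

import Mathlib

open MeasureTheory Set

noncomputable section

namespace YS

variable {E : Type*} [NormedAddCommGroup E] [NormedSpace ℝ E]

/-- A Volterra kernel: a measurable `K : ℝ² → ℝ` with `K t s = 0` whenever `s ≥ t`. -/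
def IsVolterraKernel (K : ℝ → ℝ → ℝ) : Prop :=
  Measurable (Function.uncurry K) ∧ ∀ t s : ℝ, t ≤ s → K t s = 0

/-- Condition (A) with exponent `α` and constant `C`; here `K' t s` denotes the partial
derivative `∂K(t,s)/∂t`, whose existence is part of the condition. -/
def CondA (T α C : ℝ) (K K' : ℝ → ℝ → ℝ) : Prop :=
  (∀ s t : ℝ, 0 < s → s < t → t ≤ T → |K t s| ≤ C * s ^ (-α) * (t - s) ^ (-α)) ∧
  ∀ s t : ℝ, 0 < s → s < t → t ≤ T →
    HasDerivAt (fun r => K r s) (K' t s) t ∧ |K' t s| ≤ C * (t - s) ^ (-(α + 1))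

/-- The operator `𝒦*`:  `(𝒦*φ)(s) = φ(s)K(T,s) + ∫_s^T [φ(r) − φ(s)] ∂K(r,s)/∂r dr`. -/
def Kstar (T : ℝ) (K K' : ℝ → ℝ → ℝ) (φ : ℝ → E) (s : ℝ) : E :=
  K T s • φ s + ∫ r in s..T, K' r s • (φ r - φ s)

/-- The operator `A^K`. -/
def AK (T : ℝ) (K' : ℝ → ℝ → ℝ) (φ : ℝ → E) (s : ℝ) : E :=
  ∫ r in s..T, K' r s • (φ r - φ s)

/-- Rectangular increment `f(u₁,u₂;v₁,v₂)`. -/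
def rectInc (ψ : ℝ → ℝ → E) (u₁ u₂ v₁ v₂ : ℝ) : E :=
  ψ u₁ v₁ + ψ u₂ v₂ - ψ u₁ v₂ - ψ u₂ v₁

/-- The operator `B^K`. -/
def BK (T : ℝ) (K' : ℝ → ℝ → ℝ) (ψ : ℝ → ℝ → E) (u v : ℝ) : E :=
  ∫ r₂ in v..T, ∫ r₁ in u..T, (K' r₁ u * K' r₂ v) • rectInc ψ u r₁ v r₂

/-- The operator `𝒦* ⊗ 𝒦*`. -/
def KstarT (T : ℝ) (K K' : ℝ → ℝ → ℝ) (ψ : ℝ → ℝ → E) (u v : ℝ) : E :=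
  (K T u * K T v) • ψ u v + K T v • AK T K' (fun x => ψ x v) u +
    K T u • AK T K' (fun y => ψ u y) v + BK T K' ψ u v

/-- A partition `0 = s₀ < s₁ < ⋯ < s_n = T` of `[0,T]`. -/
structure Partition (T : ℝ) where
  n : ℕ
  pts : ℕ → ℝ
  n_pos : 0 < n
  first : pts 0 = 0
  last : pts n = T
  lt : ∀ i < n, pts i < pts (i + 1)

/-- Mesh of a partition: the largest increment. -/
def Partition.mesh {T : ℝ} (P : Partition T) : ℝ :=
  (Finset.range P.n).sup' (Finset.nonempty_range_iff.mpr P.n_pos.ne')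
    fun i => P.pts (i + 1) - P.pts i

/-- One-dimensional step approximation `φ^π`. -/
def step1 {T : ℝ} (P : Partition T) (φ : ℝ → E) (s : ℝ) : E :=
  ∑ i ∈ Finset.range P.n,
    (Set.Ico (P.pts i) (P.pts (i + 1))).indicator (fun _ => φ (P.pts i)) s

/-- Two-dimensional step approximation `ψ^π` for the grid partition `P × Q`. -/
def step2 {T : ℝ} (P Q : Partition T) (ψ : ℝ → ℝ → E) (u v : ℝ) : E :=
  ∑ i ∈ Finset.range P.n, ∑ j ∈ Finset.range Q.n,
    ((Set.Ico (P.pts i) (P.pts (i + 1))) ×ˢ (Set.Ico (Q.pts j) (Q.pts (j + 1)))).indicator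
      (fun _ => ψ (P.pts i) (Q.pts j)) (u, v)

/-- `λ`-Hölder continuity on `[0,T]` with constant `C`. -/
def IsHolderWith (T lam C : ℝ) (φ : ℝ → E) : Prop :=
  ∀ t₁ ∈ Icc (0:ℝ) T, ∀ t₂ ∈ Icc (0:ℝ) T, ‖φ t₁ - φ t₂‖ ≤ C * |t₁ - t₂| ^ lam

/-- `λ`-Hölder continuity on `[0,T]`. -/
def IsHolder (T lam : ℝ) (φ : ℝ → E) : Prop := ∃ C : ℝ, IsHolderWith T lam C φ

/-- `λ`-Hölder bi-continuity with constant `C`. -/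
def IsHolderBiWith (T lam C : ℝ) (ψ : ℝ → ℝ → E) : Prop :=
  (∀ u₁ ∈ Icc (0:ℝ) T, ∀ u₂ ∈ Icc (0:ℝ) T, ∀ v ∈ Icc (0:ℝ) T,
      ‖ψ u₂ v - ψ u₁ v‖ ≤ C * |u₂ - u₁| ^ lam) ∧
  ∀ u ∈ Icc (0:ℝ) T, ∀ v₁ ∈ Icc (0:ℝ) T, ∀ v₂ ∈ Icc (0:ℝ) T,
      ‖ψ u v₂ - ψ u v₁‖ ≤ C * |v₂ - v₁| ^ lam

/-- `λ`-Hölder bi-continuity. -/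
def IsHolderBi (T lam : ℝ) (ψ : ℝ → ℝ → E) : Prop := ∃ C : ℝ, IsHolderBiWith T lam C ψ

/-- Strong `λ`-Hölder bi-continuity with constant `C`. -/
def IsStrongHolderBiWith (T lam C : ℝ) (ψ : ℝ → ℝ → E) : Prop :=
  IsHolderBiWith T lam C ψ ∧
  ∀ u₁ ∈ Icc (0:ℝ) T, ∀ u₂ ∈ Icc (0:ℝ) T, ∀ v₁ ∈ Icc (0:ℝ) T, ∀ v₂ ∈ Icc (0:ℝ) T,
    ‖rectInc ψ u₁ u₂ v₁ v₂‖ ≤ C * |u₂ - u₁| ^ lam * |v₂ - v₁| ^ lam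

/-- Strong `λ`-Hölder bi-continuity. -/
def IsStrongHolderBi (T lam : ℝ) (ψ : ℝ → ℝ → E) : Prop :=
  ∃ C : ℝ, IsStrongHolderBiWith T lam C ψ

/-- The covariance function `R(s,t) = ∫_0^{s∧t} K(t,r)K(s,r) dr` of the Volterra process. -/
def covR (K : ℝ → ℝ → ℝ) (s t : ℝ) : ℝ := ∫ r in (0:ℝ)..(min s t), K t r * K s r

/-- The 2D Riemann–Stieltjes sum of `f` against `g` over the grid partition `P × Q`. -/
def RSsum {T : ℝ} (P Q : Partition T) (f g : ℝ → ℝ → ℝ) : ℝ :=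
  ∑ i ∈ Finset.range P.n, ∑ j ∈ Finset.range Q.n,
    f (P.pts i) (Q.pts j) *
      rectInc g (P.pts i) (P.pts (i + 1)) (Q.pts j) (Q.pts (j + 1))

/-!
Put `u = r - s_k` and `v = r - s`. For `r ∈ (s_k, s_{k+1})` we have `0 ≤ u ≤ ‖π‖` and `u ≤ v`, so
splitting `λ = (λ - α - ε) + (α + ε)` gives `u ^ λ ≤ ‖π‖ ^ (λ - α - ε) * v ^ (α + ε)`. Multiplied by
`v ^ (-α - 1)` the right-hand side becomes a multiple of `v ^ (ε - 1)`, whose primitive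
`ε⁻¹ * v ^ ε` telescopes over the cells of the partition.
-/

section Cell

theorem rpow_le_rpow_sub_mul_rpow {u v δ p q : ℝ} (hu : 0 ≤ u) (huδ : u ≤ δ) (huv : u ≤ v)
    (hq : 0 ≤ q) (hqp : q ≤ p) : u ^ p ≤ δ ^ (p - q) * v ^ q :=
  calc u ^ p = u ^ (p - q) * u ^ q := by
        rw [← Real.rpow_add_of_nonneg hu (sub_nonneg.mpr hqp) hq, sub_add_cancel]
    _ ≤ δ ^ (p - q) * v ^ q :=
        mul_le_mul (Real.rpow_le_rpow hu huδ (sub_nonneg.mpr hqp)) (Real.rpow_le_rpow hu huv hq)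
          (Real.rpow_nonneg hu q) (Real.rpow_nonneg (hu.trans huδ) (p - q))

theorem intervalIntegrable_sub_rpow {p : ℝ} (hp : -1 < p) (s a b : ℝ) :
    IntervalIntegrable (fun r => (r - s) ^ p) volume a b := by
  simpa using (intervalIntegral.intervalIntegrable_rpow' hp).comp_sub_right
    (a := a - s) (b := b - s) s

theorem integral_sub_rpow_sub_one {ε : ℝ} (hε : 0 < ε) (s a b : ℝ) :
    ∫ r in a..b, (r - s) ^ (ε - 1) = ε⁻¹ * ((b - s) ^ ε - (a - s) ^ ε) := by
  rw [intervalIntegral.integral_comp_sub_right (fun r => r ^ (ε - 1)) s,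
    integral_rpow (Or.inl (by linarith)), sub_add_cancel, div_eq_inv_mul]

variable {α lam ε s a b r δ : ℝ}

theorem sub_rpow_mul_sub_rpow_le (hαε : 0 ≤ α + ε) (hgap : 0 ≤ lam - α - ε)
    (hsa : s ≤ a) (har : a < r) (hrδ : r - a ≤ δ) :
    (r - a) ^ lam * (r - s) ^ (-α - 1) ≤ δ ^ (lam - α - ε) * (r - s) ^ (ε - 1) := by
  have hrs : 0 < r - s := by linarith
  calc (r - a) ^ lam * (r - s) ^ (-α - 1)
      ≤ δ ^ (lam - (α + ε)) * (r - s) ^ (α + ε) * (r - s) ^ (-α - 1) := by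
        gcongr
        exact rpow_le_rpow_sub_mul_rpow (by linarith) hrδ (by linarith) hαε (by linarith)
    _ = δ ^ (lam - α - ε) * (r - s) ^ (ε - 1) := by
        rw [mul_assoc, ← Real.rpow_add hrs]
        ring_nf

theorem intervalIntegrable_sub_rpow_mul_sub_rpow {p q : ℝ} (hp : 0 ≤ p) (hpq : -1 < p + q)
    (hsa : s ≤ a) (hab : a ≤ b) :
    IntervalIntegrable (fun r => (r - a) ^ p * (r - s) ^ q) volume a b := by
  refine (intervalIntegrable_sub_rpow hpq s a b).mono_fun' (by fun_prop) ?_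
  filter_upwards [ae_restrict_mem measurableSet_uIoc] with r hr
  have har : a < r := (uIoc_of_le hab ▸ hr).1
  have hrs : 0 < r - s := by linarith
  rw [Real.norm_of_nonneg (mul_nonneg (Real.rpow_nonneg (by linarith) p)
    (Real.rpow_nonneg hrs.le q)), Real.rpow_add hrs]
  gcongr

theorem integral_sub_rpow_mul_sub_rpow_le (hε : 0 < ε) (hαε : 0 ≤ α + ε)
    (hgap : 0 ≤ lam - α - ε) (hsa : s ≤ a) (hab : a ≤ b) (hbδ : b - a ≤ δ) :
    ∫ r in a..b, (r - a) ^ lam * (r - s) ^ (-α - 1) ≤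
      δ ^ (lam - α - ε) * ε⁻¹ * ((b - s) ^ ε - (a - s) ^ ε) :=
  calc ∫ r in a..b, (r - a) ^ lam * (r - s) ^ (-α - 1)
      ≤ ∫ r in a..b, δ ^ (lam - α - ε) * (r - s) ^ (ε - 1) := by
        refine intervalIntegral.integral_mono_on_of_le_Ioo hab
          (intervalIntegrable_sub_rpow_mul_sub_rpow (by linarith) (by linarith) hsa hab)
          ((intervalIntegrable_sub_rpow (by linarith) s a b).const_mul _) fun r hr => ?_
        exact sub_rpow_mul_sub_rpow_le hαε hgap hsa hr.1 (by linarith [hr.2])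
    _ = δ ^ (lam - α - ε) * ε⁻¹ * ((b - s) ^ ε - (a - s) ^ ε) := by
        rw [intervalIntegral.integral_const_mul, integral_sub_rpow_sub_one hε, mul_assoc]

end Cell

namespace Partition

variable {T : ℝ} (P : Partition T)

theorem strictMonoOn_pts : StrictMonoOn P.pts (Iic P.n) :=
  strictMonoOn_Iic_of_lt_succ P.lt

theorem pts_succ_sub_le_mesh {k : ℕ} (hk : k < P.n) : P.pts (k + 1) - P.pts k ≤ P.mesh :=
  Finset.le_sup' (fun i => P.pts (i + 1) - P.pts i) (Finset.mem_range.mpr hk)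

theorem mesh_nonneg : 0 ≤ P.mesh :=
  (sub_nonneg.mpr (P.lt 0 P.n_pos).le).trans (P.pts_succ_sub_le_mesh P.n_pos)

end Partition

theorem tail_sum_estimate_general {α lam ε s δ : ℝ} (hε : 0 < ε) (hαε : 0 ≤ α + ε)
    (hgap : 0 ≤ lam - α - ε) {x : ℕ → ℝ} {m n : ℕ} (hmn : m ≤ n) (hx : MonotoneOn x (Icc m n))
    (hsm : s ≤ x m) (hδ : 0 ≤ δ) (hxδ : ∀ k ∈ Finset.Ico m n, x (k + 1) - x k ≤ δ) :
    ∑ k ∈ Finset.Ico m n, ∫ r in (x k)..(x (k + 1)), (r - x k) ^ lam * (r - s) ^ (-α - 1) ≤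
      (x n - s) ^ ε * ε⁻¹ * δ ^ (lam - α - ε) := by
  have hcell : ∀ k ∈ Finset.Ico m n,
      ∫ r in (x k)..(x (k + 1)), (r - x k) ^ lam * (r - s) ^ (-α - 1) ≤
        δ ^ (lam - α - ε) * ε⁻¹ * ((x (k + 1) - s) ^ ε - (x k - s) ^ ε) := fun k hk => by
    obtain ⟨hmk, hkn⟩ := Finset.mem_Ico.mp hk
    exact integral_sub_rpow_mul_sub_rpow_le hε hαε hgap
      (hsm.trans (hx ⟨le_rfl, hmn⟩ ⟨hmk, hkn.le⟩ hmk))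
      (hx ⟨hmk, hkn.le⟩ ⟨hmk.trans k.le_succ, hkn⟩ k.le_succ) (hxδ k hk)
  calc _ ≤ ∑ k ∈ Finset.Ico m n,
        δ ^ (lam - α - ε) * ε⁻¹ * ((x (k + 1) - s) ^ ε - (x k - s) ^ ε) :=
        Finset.sum_le_sum hcell
    _ = δ ^ (lam - α - ε) * ε⁻¹ * ((x n - s) ^ ε - (x m - s) ^ ε) := by
        rw [← Finset.mul_sum, Finset.sum_Ico_sub (fun k => (x k - s) ^ ε) hmn]
    _ ≤ δ ^ (lam - α - ε) * ε⁻¹ * (x n - s) ^ ε := by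
        gcongr
        exact sub_le_self _ (Real.rpow_nonneg (sub_nonneg.mpr hsm) ε)
    _ = (x n - s) ^ ε * ε⁻¹ * δ ^ (lam - α - ε) := by ring

/-- estimate (2.7): the tail-sum estimate
`Σ_{k ≥ i+1} ∫_{s_k}^{s_{k+1}} (r−s_k)^λ (r−s)^{−α−1} dr ≤ (T−s)^ε ε⁻¹ ‖π‖^{λ−α−ε}`. -/
theorem tail_sum_estimate (T α lam ε : ℝ) (hT : 0 < T) (hα : 0 ≤ α)
    (hlam : 0 < lam) (hlam' : lam ≤ 1) (hε : 0 < ε) (hlamαε : 0 < lam - α - ε)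
    (P : Partition T) :
    ∀ i < P.n, ∀ s ∈ Ico (P.pts i) (P.pts (i + 1)),
      (∑ k ∈ Finset.Ico (i + 1) P.n,
          ∫ r in (P.pts k)..(P.pts (k + 1)), (r - P.pts k) ^ lam * (r - s) ^ (-α - 1)) ≤
        (T - s) ^ ε * ε⁻¹ * P.mesh ^ (lam - α - ε) := by
  intro i hi s hs
  simpa only [P.last] using tail_sum_estimate_general hε (by linarith) hlamαε.le hi
    (P.strictMonoOn_pts.monotoneOn.mono fun _ hk => hk.2) hs.2.le P.mesh_nonneg
    fun k hk => P.pts_succ_sub_le_mesh (Finset.mem_Ico.mp hk).2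

end YS
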